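/- arXiv:2307.12110 — 12 statements merged into one kernel-verified Lean document; each statement's English description precedes it below -/
import Mathlib

section
/- For every k with 0 ≤ k ≤ p − 2, one has h_{k+1} = h_k if and only if c(k + 1 + h_k) = h_k. (Proposition 4.7, first equivalence.) -/
/-- The shifted h-index of order `k`: the largest `m` with `1 ≤ m ≤ p - k` and
`c (k + m) ≥ m` (the Hirsch h-index of the tail sequence `c (k+1), …, c p`).
Taken as the `sup` of the (finite) set of such `m`, which equals its maximum
when the set is nonempty and is `0` otherwise. -/
def hIdx (p : ℕ) (c : ℕ → ℕ) (k : ℕ) : ℕ :=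
  ((Finset.Icc 1 (p - k)).filter (fun m => m ≤ c (k + m))).sup id

/-- The shifted core sum `N_k = Σ_{j=k+1}^{k+h_k} c j`. -/
def coreSum (p : ℕ) (c : ℕ → ℕ) (k : ℕ) : ℕ :=
  ∑ j ∈ Finset.Icc (k + 1) (k + hIdx p c k), c j

/-- The shifted e-index `e_k = √(N_k − h_k²)`. -/
noncomputable def eIdx (p : ℕ) (c : ℕ → ℕ) (k : ℕ) : ℝ :=
  Real.sqrt ((coreSum p c k : ℝ) - (hIdx p c k : ℝ) ^ 2)

theorem hIdx_spec (p : ℕ) (c : ℕ → ℕ)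
    (hpos : ∀ j, 1 ≤ j → j ≤ p → 1 ≤ c j) (k : ℕ) (hk : k + 1 ≤ p) :
    1 ≤ hIdx p c k ∧ hIdx p c k ≤ p - k ∧ hIdx p c k ≤ c (k + hIdx p c k) ∧
      ∀ m, 1 ≤ m → m ≤ p - k → m ≤ c (k + m) → m ≤ hIdx p c k := by
  have hne : ((Finset.Icc 1 (p - k)).filter (fun m => m ≤ c (k + m))).Nonempty :=
    ⟨1, by
      simp only [Finset.mem_filter, Finset.mem_Icc]
      exact ⟨⟨le_rfl, by omega⟩, hpos _ (by omega) (by omega)⟩⟩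
  obtain ⟨m, hm, he⟩ := Finset.exists_mem_eq_sup _ hne id
  have he' : hIdx p c k = m := he
  simp only [Finset.mem_filter, Finset.mem_Icc] at hm
  refine ⟨by omega, by omega, by rw [he']; exact hm.2, ?_⟩
  intro n h1 h2 h3
  exact Finset.le_sup (f := id)
    (by simp only [Finset.mem_filter, Finset.mem_Icc]; exact ⟨⟨h1, h2⟩, h3⟩)

theorem stmt_1 (p : ℕ) (hp : 1 ≤ p) (c : ℕ → ℕ)
    (hmono : ∀ i j, 1 ≤ i → i ≤ j → j ≤ p → c j ≤ c i)
    (hpos : ∀ j, 1 ≤ j → j ≤ p → 1 ≤ c j)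
    (hzero : ∀ j, p < j → c j = 0)
    (k : ℕ) (hk : k + 2 ≤ p) :
    hIdx p c (k + 1) = hIdx p c k ↔ c (k + 1 + hIdx p c k) = hIdx p c k := by
  obtain ⟨a1, a2, a3, a4⟩ := hIdx_spec p c hpos k (by omega)
  obtain ⟨b1, b2, b3, b4⟩ := hIdx_spec p c hpos (k + 1) (by omega)
  constructor
  · intro h
    rw [h] at b2 b3
    refine le_antisymm ?_ b3
    by_contra hlt
    have e : k + (hIdx p c k + 1) = k + 1 + hIdx p c k := by omega
    have := a4 (hIdx p c k + 1) (by omega) (by omega) (by rw [e]; omega)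
    omega
  · intro h
    have hle : k + 1 + hIdx p c k ≤ p := by
      by_contra hlt
      have := hzero (k + 1 + hIdx p c k) (by omega)
      omega
    apply le_antisymm
    · refine a4 _ b1 (by omega) (b3.trans ?_)
      exact hmono _ _ (by omega) (by omega) (by omega)
    · exact b4 _ a1 (by omega) h.ge
end

section
/- For every k with 0 ≤ k ≤ p − 2, one has h_{k+1} = h_k − 1 if and only if c(k + 1 + h_k) < h_k. (Proposition 4.7, second equivalence.) -/
theorem hIdx_ge (p : ℕ) (c : ℕ → ℕ) (k m : ℕ) (h1 : 1 ≤ m) (h2 : k + m ≤ p)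
    (h3 : m ≤ c (k + m)) : m ≤ hIdx p c k := by
  unfold hIdx
  refine Finset.le_sup (f := id) (b := m) ?_
  simp only [Finset.mem_filter, Finset.mem_Icc]
  exact ⟨⟨h1, by omega⟩, h3⟩

theorem hIdx_spec_s2 (p : ℕ) (c : ℕ → ℕ) (k : ℕ) (h : 1 ≤ hIdx p c k) :
    k + hIdx p c k ≤ p ∧ hIdx p c k ≤ c (k + hIdx p c k) := by
  have hne : ((Finset.Icc 1 (p - k)).filter (fun m => m ≤ c (k + m))).Nonempty := by
    by_contra hn
    rw [Finset.not_nonempty_iff_eq_empty] at hn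
    unfold hIdx at h
    rw [hn] at h
    simp at h
  obtain ⟨m, hm, he⟩ := Finset.exists_mem_eq_sup _ hne id
  have he2 : hIdx p c k = m := he
  rw [he2]
  simp only [Finset.mem_filter, Finset.mem_Icc] at hm
  exact ⟨by omega, hm.2⟩

theorem stmt_2 (p : ℕ) (hp : 1 ≤ p) (c : ℕ → ℕ)
    (hmono : ∀ i j, 1 ≤ i → i ≤ j → j ≤ p → c j ≤ c i)
    (hpos : ∀ j, 1 ≤ j → j ≤ p → 1 ≤ c j)
    (hzero : ∀ j, p < j → c j = 0)
    (k : ℕ) (hk : k + 2 ≤ p) :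
    hIdx p c (k + 1) = hIdx p c k - 1 ↔ c (k + 1 + hIdx p c k) < hIdx p c k := by
  have a0 : 1 ≤ hIdx p c k :=
    hIdx_ge p c k 1 le_rfl (by omega) (hpos _ (by omega) (by omega))
  have a1 : 1 ≤ hIdx p c (k + 1) :=
    hIdx_ge p c (k + 1) 1 le_rfl (by omega) (hpos _ (by omega) (by omega))
  obtain ⟨s1, s2⟩ := hIdx_spec_s2 p c k a0
  obtain ⟨t1, t2⟩ := hIdx_spec_s2 p c (k + 1) a1
  have g := hIdx_ge p c (k + 1)
  generalize hIdx p c k = h at *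
  generalize hIdx p c (k + 1) = h' at *
  constructor
  · intro e
    by_contra hn
    by_cases hle : k + 1 + h ≤ p
    · have := g h a0 hle (by omega)
      omega
    · have := hzero (k + 1 + h) (by omega)
      omega
  · intro e
    have u : h' < h := by
      by_contra hn
      have := hmono (k + 1 + h) (k + 1 + h') (by omega) (by omega) t1
      omega
    have e2 : k + 1 + (h - 1) = k + h := by omega
    have := g (h - 1) (by omega) (by omega) (by rw [e2]; omega)
    omega
end

section
/- For every k with 0 ≤ k ≤ p − 2, if c(k + 1 + h_k) < h_k (so that h_{k+1} = h_k − 1), then the shifted core sums satisfy the recurrence N_{k+1} = N_k − c(k+1). (Recurrence (4.25), case δ_k = 0.) -/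
theorem stmt_4 (p : ℕ) (hp : 1 ≤ p) (c : ℕ → ℕ)
    (hmono : ∀ i j, 1 ≤ i → i ≤ j → j ≤ p → c j ≤ c i)
    (hpos : ∀ j, 1 ≤ j → j ≤ p → 1 ≤ c j)
    (hzero : ∀ j, p < j → c j = 0)
    (k : ℕ) (hk : k + 2 ≤ p)
    (hc : c (k + 1 + hIdx p c k) < hIdx p c k) :
    (coreSum p c (k + 1) : ℤ) = (coreSum p c k : ℤ) - c (k + 1) := by
  have hmem : ∀ q, hIdx p c q ≠ 0 →
      hIdx p c q ∈ (Finset.Icc 1 (p - q)).filter (fun m => m ≤ c (q + m)) := by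
    intro q hq
    have hne : ((Finset.Icc 1 (p - q)).filter (fun m => m ≤ c (q + m))).Nonempty := by
      by_contra hcon
      rw [Finset.not_nonempty_iff_eq_empty] at hcon
      apply hq
      unfold hIdx
      rw [hcon]
      rfl
    obtain ⟨m, hm, hme⟩ := Finset.exists_mem_eq_sup _ hne (id : ℕ → ℕ)
    have : hIdx p c q = m := hme
    rw [this]
    exact hm
  have hle : ∀ q m, 1 ≤ m → m ≤ p - q → m ≤ c (q + m) → m ≤ hIdx p c q := by
    intro q m h1 h2 h3
    exact Finset.le_sup (f := (id : ℕ → ℕ))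
      (Finset.mem_filter.mpr ⟨Finset.mem_Icc.mpr ⟨h1, h2⟩, h3⟩)
  have hh := hmem k (by omega)
  rw [Finset.mem_filter, Finset.mem_Icc] at hh
  obtain ⟨⟨h1, h2⟩, h3⟩ := hh
  have key : hIdx p c (k + 1) + 1 = hIdx p c k := by
    apply le_antisymm
    · by_contra hcon
      have hm := hmem (k + 1) (by omega)
      rw [Finset.mem_filter, Finset.mem_Icc] at hm
      obtain ⟨⟨g1, g2⟩, g3⟩ := hm
      have := hmono (k + 1 + hIdx p c k) (k + 1 + hIdx p c (k + 1))
        (by omega) (by omega) (by omega)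
      omega
    · by_cases h : hIdx p c k = 1
      · omega
      · have := hle (k + 1) (hIdx p c k - 1) (by omega) (by omega) (by
          have e : k + 1 + (hIdx p c k - 1) = k + hIdx p c k := by omega
          rw [e]
          omega)
        omega
  have e : coreSum p c k = c (k + 1) + coreSum p c (k + 1) := by
    unfold coreSum
    have e2 : k + hIdx p c k = k + 1 + hIdx p c (k + 1) := by omega
    rw [e2, ← Finset.insert_Icc_add_one_left_eq_Icc (by omega : k + 1 ≤ k + 1 + hIdx p c (k + 1)),
      Finset.sum_insert (by simp)]
  rw [e]
  push_cast
  ring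
end

section
/- For every k with 0 ≤ k ≤ p − 2, if h_{k+1} = h_k (equivalently, c(k + 1 + h_k) = h_k), then e_k ≥ e_{k+1}. (Proposition 4.8(i).) -/
theorem stmt_5 (p : ℕ) (hp : 1 ≤ p) (c : ℕ → ℕ)
    (hmono : ∀ i j, 1 ≤ i → i ≤ j → j ≤ p → c j ≤ c i)
    (hpos : ∀ j, 1 ≤ j → j ≤ p → 1 ≤ c j)
    (hzero : ∀ j, p < j → c j = 0)
    (k : ℕ) (hk : k + 2 ≤ p)
    (hh : hIdx p c (k + 1) = hIdx p c k) :
    eIdx p c (k + 1) ≤ eIdx p c k := by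
  unfold eIdx
  rw [hh]
  apply Real.sqrt_le_sqrt
  apply sub_le_sub_right
  have key : coreSum p c (k + 1) ≤ coreSum p c k := by
    unfold coreSum
    rw [hh]
    have e : ∑ j ∈ Finset.Icc (k + 1 + 1) (k + 1 + hIdx p c k), c j
        = ∑ j ∈ Finset.Icc (k + 1) (k + hIdx p c k), c (j + 1) := by
      rw [show k + 1 + hIdx p c k = k + hIdx p c k + 1 by omega,
        ← Finset.map_add_right_Icc, Finset.sum_map]
      rfl
    rw [e]
    apply Finset.sum_le_sum
    intro j hj
    rw [Finset.mem_Icc] at hj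
    by_cases hjp : j + 1 ≤ p
    · exact hmono j (j + 1) (by omega) (by omega) hjp
    · rw [hzero (j + 1) (by omega)]
      exact Nat.zero_le _
  exact_mod_cast key
end

section
/- For every k with 0 ≤ k ≤ p − 2, if h_{k+1} = h_k − 1 and c(k+1) ≥ 2·h_k − 1, then e_k ≥ e_{k+1}. (Proposition 4.8(ii).) -/
theorem stmt_6 (p : ℕ) (hp : 1 ≤ p) (c : ℕ → ℕ)
    (hmono : ∀ i j, 1 ≤ i → i ≤ j → j ≤ p → c j ≤ c i)
    (hpos : ∀ j, 1 ≤ j → j ≤ p → 1 ≤ c j)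
    (hzero : ∀ j, p < j → c j = 0)
    (k : ℕ) (hk : k + 2 ≤ p)
    (hh : hIdx p c (k + 1) = hIdx p c k - 1)
    (hc : 2 * hIdx p c k - 1 ≤ c (k + 1)) :
    eIdx p c (k + 1) ≤ eIdx p c k := by
  unfold eIdx
  apply Real.sqrt_le_sqrt
  unfold coreSum
  rw [hh]
  generalize hIdx p c k = h at *
  cases h with
  | zero => simp
  | succ n =>
    have h1 : ∑ j ∈ Finset.Icc (k + 1) (k + (n + 1)), c j
        = c (k + 1) + ∑ j ∈ Finset.Icc (k + 1 + 1) (k + 1 + n), c j := by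
      rw [← Finset.add_sum_Ioc_eq_sum_Icc (by omega)]
      congr 1
      apply Finset.sum_congr _ (fun _ _ => rfl)
      ext x
      simp only [Finset.mem_Ioc, Finset.mem_Icc]
      omega
    simp only [Nat.add_sub_cancel]
    rw [h1]
    have h2 : 2 * n + 1 ≤ c (k + 1) := by omega
    have h3 : (2 * n + 1 : ℝ) ≤ c (k + 1) := by exact_mod_cast h2
    push_cast
    nlinarith
end

section
/- For every k with 0 ≤ k ≤ p − 2, if h_{k+1} = h_k − 1 and c(k+1) < 2·h_k − 1, then e_k < e_{k+1}. (Proposition 4.8(iii).) -/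
theorem stmt_7 (p : ℕ) (hp : 1 ≤ p) (c : ℕ → ℕ)
    (hmono : ∀ i j, 1 ≤ i → i ≤ j → j ≤ p → c j ≤ c i)
    (hpos : ∀ j, 1 ≤ j → j ≤ p → 1 ≤ c j)
    (hzero : ∀ j, p < j → c j = 0)
    (k : ℕ) (hk : k + 2 ≤ p)
    (hh : hIdx p c (k + 1) = hIdx p c k - 1)
    (hc : c (k + 1) < 2 * hIdx p c k - 1) :
    eIdx p c k < eIdx p c (k + 1) := by
  obtain ⟨n, hn⟩ : ∃ n, hIdx p c k = n + 1 := ⟨hIdx p c k - 1, by omega⟩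
  have hn' : hIdx p c (k + 1) = n := by omega
  have hmem : n + 1 ≤ p - k ∧ n + 1 ≤ c (k + (n + 1)) := by
    have hne : ((Finset.Icc 1 (p - k)).filter (fun m => m ≤ c (k + m))).Nonempty := by
      refine ⟨1, ?_⟩
      simp only [Finset.mem_filter, Finset.mem_Icc]
      exact ⟨⟨le_refl _, by omega⟩, hpos _ (by omega) (by omega)⟩
    obtain ⟨m, hm, hme⟩ := Finset.exists_mem_eq_sup _ hne id
    have h1 : hIdx p c k = m := hme
    have h2 : m = n + 1 := by omega
    subst h2
    simp only [Finset.mem_filter, Finset.mem_Icc] at hm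
    exact ⟨hm.1.2, hm.2⟩
  have hsplit : coreSum p c k = c (k + 1) + coreSum p c (k + 1) := by
    unfold coreSum
    rw [hn, hn', ← Finset.add_sum_Ioc_eq_sum_Icc (by omega)]
    congr 1
    apply Finset.sum_congr _ (fun _ _ => rfl)
    ext x
    simp only [Finset.mem_Ioc, Finset.mem_Icc]
    omega
  have hlow : (n + 1) ^ 2 ≤ coreSum p c k := by
    unfold coreSum
    rw [hn]
    have h := Finset.card_nsmul_le_sum (Finset.Icc (k + 1) (k + (n + 1))) c (n + 1) (by
      intro x hx
      rw [Finset.mem_Icc] at hx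
      exact hmem.2.trans (hmono _ _ (by omega) hx.2 (by omega)))
    have hcard : (Finset.Icc (k + 1) (k + (n + 1))).card = n + 1 := by
      rw [Nat.card_Icc]; omega
    rw [hcard, smul_eq_mul] at h
    rw [pow_two]; exact h
  have hc' : c (k + 1) < 2 * n + 1 := by omega
  unfold eIdx
  rw [hn, hn']
  have hlowR : ((n : ℝ) + 1) ^ 2 ≤ coreSum p c k := by exact_mod_cast hlow
  have hsR : (coreSum p c k : ℝ) = c (k + 1) + coreSum p c (k + 1) := by exact_mod_cast hsplit
  have hcR : (c (k + 1) : ℝ) < 2 * n + 1 := by exact_mod_cast hc'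
  apply Real.sqrt_lt_sqrt
  · push_cast; linarith
  · push_cast; nlinarith
end

section
/- For every k with 0 ≤ k ≤ p − 2, if h_{k+1} = h_k (equivalently, c(k + 1 + h_k) = h_k), then the squared shifted e-indices satisfy e_{k+1}² = e_k² − (c(k+1) − c(k + 1 + h_k)). (Key identity in the proof of Proposition 4.8(i).) -/
theorem hIdx_sq_le_coreSum (p : ℕ) (c : ℕ → ℕ)
    (hmono : ∀ i j, 1 ≤ i → i ≤ j → j ≤ p → c j ≤ c i) (k : ℕ) :
    hIdx p c k ^ 2 ≤ coreSum p c k := by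
  have key : hIdx p c k = 0 ∨ (1 ≤ hIdx p c k ∧ hIdx p c k ≤ p - k ∧
      hIdx p c k ≤ c (k + hIdx p c k)) := by
    rcases ((Finset.Icc 1 (p - k)).filter (fun m => m ≤ c (k + m))).eq_empty_or_nonempty with h | h
    · left
      unfold hIdx
      rw [h]
      rfl
    · right
      obtain ⟨m, hm, he⟩ := Finset.exists_mem_eq_sup _ h id
      have he' : hIdx p c k = m := he
      rw [he']
      simp only [Finset.mem_filter, Finset.mem_Icc] at hm
      exact ⟨hm.1.1, hm.1.2, hm.2⟩
  unfold coreSum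
  generalize hIdx p c k = h at key ⊢
  rcases key with rfl | ⟨h1, h2, h3⟩
  · simp
  · have := Finset.card_nsmul_le_sum (Finset.Icc (k + 1) (k + h)) c h (by
      intro j hj
      rw [Finset.mem_Icc] at hj
      exact h3.trans (hmono j (k + h) (by omega) hj.2 (by omega)))
    have hc : k + h + 1 - (k + 1) = h := by omega
    rw [Nat.card_Icc, hc, smul_eq_mul] at this
    rw [pow_two]
    exact this

theorem stmt_8 (p : ℕ) (hp : 1 ≤ p) (c : ℕ → ℕ)
    (hmono : ∀ i j, 1 ≤ i → i ≤ j → j ≤ p → c j ≤ c i)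
    (hpos : ∀ j, 1 ≤ j → j ≤ p → 1 ≤ c j)
    (hzero : ∀ j, p < j → c j = 0)
    (k : ℕ) (hk : k + 2 ≤ p)
    (hh : hIdx p c (k + 1) = hIdx p c k) :
    eIdx p c (k + 1) ^ 2 =
      eIdx p c k ^ 2 - ((c (k + 1) : ℝ) - (c (k + 1 + hIdx p c k) : ℝ)) := by
  have e0 : ∀ k, eIdx p c k ^ 2 = (coreSum p c k : ℝ) - (hIdx p c k : ℝ) ^ 2 := by
    intro k
    unfold eIdx
    apply Real.sq_sqrt
    have := hIdx_sq_le_coreSum p c hmono k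
    rw [sub_nonneg]
    exact_mod_cast this
  have hs : coreSum p c (k + 1) + c (k + 1) = coreSum p c k + c (k + 1 + hIdx p c k) := by
    unfold coreSum
    rw [hh]
    generalize hIdx p c k = h
    induction h with
    | zero => simp
    | succ n ih =>
      have a1 : k + 1 + (n + 1) = (k + 1 + n) + 1 := by ring
      have a2 : k + (n + 1) = (k + n) + 1 := by ring
      have a3 : k + 1 + n = k + n + 1 := by ring
      rw [a1, a2, Finset.sum_Icc_succ_top (by omega), Finset.sum_Icc_succ_top (by omega)]
      rw [a3] at ih ⊢
      omega
  have hs' : (coreSum p c (k + 1) : ℝ) + c (k + 1)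
      = coreSum p c k + c (k + 1 + hIdx p c k) := by exact_mod_cast hs
  rw [e0, e0, hh]
  linarith
end

section
/- For every k with 0 ≤ k ≤ p − 2, if h_{k+1} = h_k − 1, then the squared shifted e-indices satisfy e_{k+1}² = e_k² − (c(k+1) − 2·h_k + 1). (Key identity in the proof of Proposition 4.8(ii)–(iii).) -/
theorem hIdx_mem_aux (p : ℕ) (c : ℕ → ℕ) (k : ℕ) (hk : k + 1 ≤ p)
    (hpos : ∀ j, 1 ≤ j → j ≤ p → 1 ≤ c j) :
    1 ≤ hIdx p c k ∧ hIdx p c k ≤ p - k ∧ hIdx p c k ≤ c (k + hIdx p c k) := by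
  have hne : ((Finset.Icc 1 (p - k)).filter (fun m => m ≤ c (k + m))).Nonempty := by
    refine ⟨1, ?_⟩
    simp only [Finset.mem_filter, Finset.mem_Icc]
    exact ⟨by omega, hpos _ (by omega) (by omega)⟩
  obtain ⟨m, hm, he⟩ := Finset.exists_mem_eq_sup _ hne id
  have h : hIdx p c k = m := he
  rw [h]
  simp only [Finset.mem_filter, Finset.mem_Icc] at hm
  exact ⟨hm.1.1, hm.1.2, hm.2⟩

theorem eIdx_sq_aux (p : ℕ) (c : ℕ → ℕ) (k : ℕ) (hk : k + 1 ≤ p)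
    (hmono : ∀ i j, 1 ≤ i → i ≤ j → j ≤ p → c j ≤ c i)
    (hpos : ∀ j, 1 ≤ j → j ≤ p → 1 ≤ c j) :
    eIdx p c k ^ 2 = (coreSum p c k : ℝ) - (hIdx p c k : ℝ) ^ 2 := by
  obtain ⟨h1, h2, h3⟩ := hIdx_mem_aux p c k hk hpos
  unfold eIdx
  apply Real.sq_sqrt
  have h : hIdx p c k ^ 2 ≤ coreSum p c k := by
    unfold coreSum
    have := Finset.card_nsmul_le_sum (Finset.Icc (k + 1) (k + hIdx p c k)) c (hIdx p c k) (by
      intro j hj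
      rw [Finset.mem_Icc] at hj
      exact h3.trans (hmono _ _ (by omega) hj.2 (by omega)))
    rw [Nat.card_Icc, smul_eq_mul, show k + hIdx p c k + 1 - (k + 1) = hIdx p c k by omega] at this
    rw [sq]
    exact this
  have h' : (hIdx p c k : ℝ) ^ 2 ≤ (coreSum p c k : ℝ) := by exact_mod_cast h
  linarith

theorem stmt_9 (p : ℕ) (hp : 1 ≤ p) (c : ℕ → ℕ)
    (hmono : ∀ i j, 1 ≤ i → i ≤ j → j ≤ p → c j ≤ c i)
    (hpos : ∀ j, 1 ≤ j → j ≤ p → 1 ≤ c j)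
    (hzero : ∀ j, p < j → c j = 0)
    (k : ℕ) (hk : k + 2 ≤ p)
    (hh : hIdx p c (k + 1) = hIdx p c k - 1) :
    eIdx p c (k + 1) ^ 2 =
      eIdx p c k ^ 2 - ((c (k + 1) : ℝ) - 2 * (hIdx p c k : ℝ) + 1) := by
  rw [eIdx_sq_aux p c (k + 1) (by omega) hmono hpos, eIdx_sq_aux p c k (by omega) hmono hpos]
  obtain ⟨h1, -, -⟩ := hIdx_mem_aux p c k (by omega) hpos
  have hs : coreSum p c k = c (k + 1) + coreSum p c (k + 1) := by
    unfold coreSum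
    rw [hh, show k + 1 + (hIdx p c k - 1) = k + hIdx p c k by omega,
      ← Finset.add_sum_Ioc_eq_sum_Icc (by omega)]
    congr 2
    ext x
    simp only [Finset.mem_Ioc, Finset.mem_Icc]
    omega
  rw [hs, hh]
  push_cast [Nat.cast_sub h1]
  ring
end

section
/- Suppose 0 ≤ k ≤ p − 2, e_k ≥ h_k, and h_{k+1} = h_k (equivalently, c(k + 1 + h_k) = h_k). Then e_{k+1} < h_{k+1} if and only if N_k < 2·h_k² − h_k + c(k+1) (equivalently, e_k² < h_k² − h_k + c(k+1)). (Proposition 4.9(i).) -/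
theorem hIdx_le_of (p : ℕ) (c : ℕ → ℕ) (k m : ℕ) (h1 : 1 ≤ m) (h2 : m ≤ p - k)
    (h3 : m ≤ c (k + m)) : m ≤ hIdx p c k := by
  unfold hIdx
  exact Finset.le_sup (f := id) (Finset.mem_filter.2 ⟨Finset.mem_Icc.2 ⟨h1, h2⟩, h3⟩)

theorem hIdx_mem (p : ℕ) (c : ℕ → ℕ) (k : ℕ) (h : 1 ≤ hIdx p c k) :
    hIdx p c k ≤ p - k ∧ hIdx p c k ≤ c (k + hIdx p c k) := by
  have hne : ((Finset.Icc 1 (p - k)).filter (fun m => m ≤ c (k + m))).Nonempty := by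
    by_contra hn
    rw [Finset.not_nonempty_iff_eq_empty] at hn
    unfold hIdx at h
    rw [hn] at h
    simp at h
  obtain ⟨m, hm, he⟩ := Finset.exists_mem_eq_sup _ hne id
  have he' : hIdx p c k = m := he
  rw [he']
  simp only [Finset.mem_filter, Finset.mem_Icc] at hm
  exact ⟨hm.1.2, hm.2⟩

theorem stmt_10 (p : ℕ) (hp : 1 ≤ p) (c : ℕ → ℕ)
    (hmono : ∀ i j, 1 ≤ i → i ≤ j → j ≤ p → c j ≤ c i)
    (hpos : ∀ j, 1 ≤ j → j ≤ p → 1 ≤ c j)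
    (hzero : ∀ j, p < j → c j = 0)
    (k : ℕ) (hk : k + 2 ≤ p)
    (he : (hIdx p c k : ℝ) ≤ eIdx p c k)
    (hh : hIdx p c (k + 1) = hIdx p c k) :
    eIdx p c (k + 1) < (hIdx p c (k + 1) : ℝ) ↔
      (coreSum p c k : ℤ) < 2 * (hIdx p c k : ℤ) ^ 2 - hIdx p c k + c (k + 1) := by
  have h1 : 1 ≤ hIdx p c (k + 1) :=
    hIdx_le_of p c (k + 1) 1 le_rfl (by omega) (hpos _ (by omega) (by omega))
  obtain ⟨ha, hb⟩ := hIdx_mem p c (k + 1) h1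
  have hS : coreSum p c (k + 1) + c (k + 1) = coreSum p c k + c (k + 1 + hIdx p c k) := by
    unfold coreSum
    rw [hh, ← Finset.sum_Ioc_add_eq_sum_Icc (a := k + 1) (b := k + hIdx p c k) (by omega)]
    have e : Finset.Icc (k + 1 + 1) (k + 1 + hIdx p c k)
        = insert (k + 1 + hIdx p c k) (Finset.Ioc (k + 1) (k + hIdx p c k)) := by
      ext x
      simp only [Finset.mem_Icc, Finset.mem_insert, Finset.mem_Ioc]
      omega
    rw [e, Finset.sum_insert (by simp only [Finset.mem_Ioc]; omega)]
    omega
  have hc : c (k + 1 + hIdx p c k) = hIdx p c k := by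
    rw [hh] at ha hb
    by_contra hne
    have := hIdx_le_of p c k (hIdx p c k + 1) (by omega) (by omega)
      (by rw [show k + (hIdx p c k + 1) = k + 1 + hIdx p c k by omega]; omega)
    omega
  rw [hc] at hS
  unfold eIdx
  rw [Real.sqrt_lt' (by exact_mod_cast h1), hh]
  have hS' : (coreSum p c (k + 1) : ℤ) + c (k + 1) = coreSum p c k + hIdx p c k := by
    exact_mod_cast hS
  have key : ((coreSum p c (k + 1) : ℝ) - (hIdx p c k : ℝ) ^ 2 < (hIdx p c k : ℝ) ^ 2) ↔
      ((coreSum p c (k + 1) : ℤ) - (hIdx p c k : ℤ) ^ 2 < (hIdx p c k : ℤ) ^ 2) := by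
    exact_mod_cast Iff.rfl
  rw [key]
  constructor <;> intro h <;> linarith
end

section
/- Suppose 0 ≤ k ≤ p − 2, e_k ≥ h_k, and h_{k+1} = h_k − 1 (equivalently, c(k + 1 + h_k) < h_k). Then e_{k+1} < h_{k+1} if and only if N_k < 2·h_k² − 4·h_k + c(k+1) + 2 (equivalently, e_k² < h_k² − 4·h_k + c(k+1) + 2). (Proposition 4.9(ii).) -/
theorem stmt_11 (p : ℕ) (hp : 1 ≤ p) (c : ℕ → ℕ)
    (hmono : ∀ i j, 1 ≤ i → i ≤ j → j ≤ p → c j ≤ c i)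
    (hpos : ∀ j, 1 ≤ j → j ≤ p → 1 ≤ c j)
    (hzero : ∀ j, p < j → c j = 0)
    (k : ℕ) (hk : k + 2 ≤ p)
    (he : (hIdx p c k : ℝ) ≤ eIdx p c k)
    (hh : hIdx p c (k + 1) = hIdx p c k - 1) :
    eIdx p c (k + 1) < (hIdx p c (k + 1) : ℝ) ↔
      (coreSum p c k : ℤ) <
        2 * (hIdx p c k : ℤ) ^ 2 - 4 * hIdx p c k + c (k + 1) + 2 := by
  have h1 : 1 ≤ hIdx p c (k + 1) := by
    have hm : 1 ∈ (Finset.Icc 1 (p - (k + 1))).filter (fun m => m ≤ c (k + 1 + m)) := by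
      simp only [Finset.mem_filter, Finset.mem_Icc]
      exact ⟨⟨le_refl _, by omega⟩, hpos _ (by omega) (by omega)⟩
    exact Finset.le_sup (f := id) hm
  obtain ⟨n, hn⟩ : ∃ n, hIdx p c (k + 1) = n := ⟨_, rfl⟩
  have hn' : hIdx p c k = n + 1 := by omega
  have hN : coreSum p c k = c (k + 1) + coreSum p c (k + 1) := by
    unfold coreSum
    rw [hn, hn', ← Finset.add_sum_Ioc_eq_sum_Icc (by omega)]
    have : Finset.Ioc (k + 1) (k + (n + 1)) = Finset.Icc (k + 1 + 1) (k + 1 + n) := by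
      ext x
      simp only [Finset.mem_Ioc, Finset.mem_Icc]
      omega
    rw [this]
  have hpos' : (0 : ℝ) < (n : ℝ) := by
    have : 0 < n := by omega
    exact_mod_cast this
  unfold eIdx
  rw [hN, hn', hn, Real.sqrt_lt' hpos', sub_lt_iff_lt_add]
  have : ((coreSum p c (k + 1) : ℝ) < (n : ℝ) ^ 2 + (n : ℝ) ^ 2) ↔
      ((coreSum p c (k + 1) : ℤ) < (n : ℤ) ^ 2 + (n : ℤ) ^ 2) := by
    exact_mod_cast Iff.rfl
  rw [this]
  push_cast
  constructor <;> intro h <;> nlinarith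
end

section
/- Suppose 0 ≤ k ≤ p − 2, e_k < h_k, and h_{k+1} = h_k (equivalently, c(k + 1 + h_k) = h_k). Then e_{k+1} ≥ h_{k+1} if and only if N_k ≥ 2·h_k² − h_k + c(k+1) (equivalently, e_k² ≥ h_k² − h_k + c(k+1)). (Proposition 4.10(i).) -/
theorem stmt_12 (p : ℕ) (hp : 1 ≤ p) (c : ℕ → ℕ)
    (hmono : ∀ i j, 1 ≤ i → i ≤ j → j ≤ p → c j ≤ c i)
    (hpos : ∀ j, 1 ≤ j → j ≤ p → 1 ≤ c j)
    (hzero : ∀ j, p < j → c j = 0)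
    (k : ℕ) (hk : k + 2 ≤ p)
    (he : eIdx p c k < (hIdx p c k : ℝ))
    (hh : hIdx p c (k + 1) = hIdx p c k) :
    (hIdx p c (k + 1) : ℝ) ≤ eIdx p c (k + 1) ↔
      2 * (hIdx p c k : ℤ) ^ 2 - hIdx p c k + c (k + 1) ≤ (coreSum p c k : ℤ) := by
  have hmem : hIdx p c (k + 1) ∈
      (Finset.Icc 1 (p - (k + 1))).filter (fun m => m ≤ c (k + 1 + m)) := by
    obtain ⟨m, hm, hm'⟩ := Finset.exists_mem_eq_sup
      ((Finset.Icc 1 (p - (k + 1))).filter (fun m => m ≤ c (k + 1 + m)))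
      ⟨1, by
        have := hpos (k + 1 + 1) (by omega) (by omega)
        simp only [Finset.mem_filter, Finset.mem_Icc]
        omega⟩ id
    unfold hIdx
    rw [hm']
    exact hm
  simp only [Finset.mem_filter, Finset.mem_Icc] at hmem
  rw [hh] at hmem
  obtain ⟨⟨h1, h2⟩, h3⟩ := hmem
  have hlt : c (k + 1 + hIdx p c k) < hIdx p c k + 1 := by
    by_contra hcon
    have hin : hIdx p c k + 1 ∈
        (Finset.Icc 1 (p - k)).filter (fun m => m ≤ c (k + m)) := by
      simp only [Finset.mem_filter, Finset.mem_Icc]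
      rw [show k + (hIdx p c k + 1) = k + 1 + hIdx p c k by ring]
      omega
    have hle : hIdx p c k + 1 ≤ hIdx p c k := Finset.le_sup (f := id) hin
    omega
  have hsum : coreSum p c k + hIdx p c k = c (k + 1) + coreSum p c (k + 1) := by
    have hc : c (k + 1 + hIdx p c k) = hIdx p c k := by omega
    unfold coreSum
    rw [hh]
    have e1 := Finset.sum_Ioc_add_eq_sum_Icc (f := c)
      (show k + 1 ≤ k + 1 + hIdx p c k by omega)
    have e2 := Finset.sum_Icc_succ_top
      (show k + 1 ≤ k + hIdx p c k + 1 by omega) c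
    rw [show k + hIdx p c k + 1 = k + 1 + hIdx p c k by ring, hc] at e2
    have e3 : Finset.Ioc (k + 1) (k + 1 + hIdx p c k)
        = Finset.Icc (k + 1 + 1) (k + 1 + hIdx p c k) := by
      ext x
      simp only [Finset.mem_Ioc, Finset.mem_Icc]
      omega
    rw [e3] at e1
    omega
  unfold eIdx
  rw [hh, Real.le_sqrt' (by exact_mod_cast h1)]
  have hsumZ : (coreSum p c k : ℤ) + hIdx p c k = c (k + 1) + coreSum p c (k + 1) := by
    exact_mod_cast hsum
  have hR : ((hIdx p c k : ℝ) ^ 2 ≤ (coreSum p c (k + 1) : ℝ) - (hIdx p c k : ℝ) ^ 2) ↔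
      ((hIdx p c k : ℤ) ^ 2 ≤ (coreSum p c (k + 1) : ℤ) - (hIdx p c k : ℤ) ^ 2) := by
    exact_mod_cast Iff.rfl
  rw [hR]
  constructor <;> intro h <;> linarith
end

section
/- Suppose 0 ≤ k ≤ p − 2, e_k < h_k, and h_{k+1} = h_k − 1 (equivalently, c(k + 1 + h_k) < h_k). Then e_{k+1} ≥ h_{k+1} if and only if N_k ≥ 2·h_k² − 4·h_k + c(k+1) + 2 (equivalently, e_k² ≥ h_k² − 4·h_k + c(k+1) + 2). (Proposition 4.10(ii).) -/
theorem stmt_13 (p : ℕ) (hp : 1 ≤ p) (c : ℕ → ℕ)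
    (hmono : ∀ i j, 1 ≤ i → i ≤ j → j ≤ p → c j ≤ c i)
    (hpos : ∀ j, 1 ≤ j → j ≤ p → 1 ≤ c j)
    (hzero : ∀ j, p < j → c j = 0)
    (k : ℕ) (hk : k + 2 ≤ p)
    (he : eIdx p c k < (hIdx p c k : ℝ))
    (hh : hIdx p c (k + 1) = hIdx p c k - 1) :
    (hIdx p c (k + 1) : ℝ) ≤ eIdx p c (k + 1) ↔
      2 * (hIdx p c k : ℤ) ^ 2 - 4 * hIdx p c k + c (k + 1) + 2 ≤
        (coreSum p c k : ℤ) := by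
  have h1 : 1 ≤ hIdx p c (k + 1) := by
    unfold hIdx
    have hm : 1 ∈ (Finset.Icc 1 (p - (k + 1))).filter (fun m => m ≤ c (k + 1 + m)) := by
      simp only [Finset.mem_filter, Finset.mem_Icc]
      exact ⟨⟨le_refl _, by omega⟩, hpos _ (by omega) (by omega)⟩
    exact Finset.le_sup (f := id) hm
  obtain ⟨n, hn⟩ : ∃ n, hIdx p c k = n + 1 := ⟨hIdx p c k - 1, by omega⟩
  have hn' : hIdx p c (k + 1) = n := by omega
  have hN : coreSum p c k = c (k + 1) + coreSum p c (k + 1) := by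
    unfold coreSum
    rw [hn, hn', show k + (n + 1) = k + 1 + n by ring,
      ← Finset.add_sum_Ioc_eq_sum_Icc (by omega : k + 1 ≤ k + 1 + n)]
    congr 1
    apply Finset.sum_congr _ (fun _ _ => rfl)
    ext x
    simp only [Finset.mem_Ioc, Finset.mem_Icc]
    omega
  have hpos' : (0 : ℝ) < (hIdx p c (k + 1) : ℝ) := by exact_mod_cast h1
  unfold eIdx
  rw [Real.le_sqrt' hpos', hN, hn, hn']
  generalize coreSum p c (k + 1) = M
  have key : (n : ℝ) ^ 2 ≤ (M : ℝ) - (n : ℝ) ^ 2 ↔ 2 * (n : ℤ) ^ 2 ≤ (M : ℤ) := by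
    rw [le_sub_iff_add_le, ← two_mul]
    exact_mod_cast Iff.rfl
  rw [key]
  push_cast
  constructor <;> intro h <;> nlinarith
end
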